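/- Let X be a separable metric space. Let a = (a_n)_{n∈ℕ} and, for each k ∈ ℕ, a_k = (a_{n,k})_{n∈ℕ} be sequences of nonnegative real numbers with ∑_n a_n = 1 and ∑_n a_{n,k} = 1 for every k. Let (μ_n)_{n∈ℕ} and, for each k, (μ_{n,k})_{n∈ℕ} be Borel probability measures on X. If ∑_n |a_{n,k} − a_n| → 0 as k → ∞ and, for each n, μ_{n,k} converges weakly to μ_n as k → ∞, then ∑_n a_{n,k} μ_{n,k} converges weakly to ∑_n a_n μ_n as k → ∞. -/

import Mathlib

open MeasureTheory

/-!
Integrating a fixed `f` turns the theorem into one about series: the integral of `f` against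
`∑ₙ aₙ μₙ` is `∑ₙ aₙ bₙ` with `bₙ = ∫ f dμₙ`. Split
`∑ₙ aₙₖ bₙₖ = ∑ₙ aₙ bₙₖ + ∑ₙ (aₙₖ - aₙ) bₙₖ`. As the `bₙₖ` are bounded by a constant `C`, the first
series converges to `∑ₙ aₙ bₙ` by Tannery's theorem, and the second is at most `C ∑ₙ |aₙₖ - aₙ|`.
-/

open Filter Topology
open scoped ENNReal

section WeightedSeries

theorem summable_of_tsum_ne_zero {ι M : Type*} [AddCommMonoid M] [TopologicalSpace M] {f : ι → M}
    (hf : ∑' n, f n ≠ 0) : Summable f :=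
  not_imp_comm.1 tsum_eq_zero_of_not_summable hf

variable {κ ι R E : Type*} [NormedRing R] [NormedAddCommGroup E] [Module R E] [IsBoundedSMul R E]
  {C : ℝ}

theorem norm_smul_le_norm_mul_of_norm_le (r : R) {x : E} (hx : ‖x‖ ≤ C) : ‖r • x‖ ≤ ‖r‖ * C :=
  (norm_smul_le r x).trans (mul_le_mul_of_nonneg_left hx (norm_nonneg r))

theorem norm_tsum_smul_le {a : ι → R} {b : ι → E} (ha : Summable fun n => ‖a n‖)
    (hb : ∀ n, ‖b n‖ ≤ C) : ‖∑' n, a n • b n‖ ≤ (∑' n, ‖a n‖) * C :=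
  tsum_of_norm_bounded (ha.hasSum.mul_right C) fun n =>
    norm_smul_le_norm_mul_of_norm_le (a n) (hb n)

variable [CompleteSpace E]

theorem summable_smul_of_norm_le {a : ι → R} {b : ι → E} (ha : Summable fun n => ‖a n‖)
    (hb : ∀ n, ‖b n‖ ≤ C) : Summable fun n => a n • b n :=
  .of_norm_bounded (ha.mul_right C) fun n => norm_smul_le_norm_mul_of_norm_le (a n) (hb n)

theorem tendsto_tsum_smul_of_tendsto_tsum_norm_sub {l : Filter κ} {a : ι → R} {a' : κ → ι → R}
    {b : ι → E} {b' : κ → ι → E} (ha : Summable fun n => ‖a n‖)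
    (ha' : ∀ k, Summable fun n => ‖a' k n - a n‖) (hb' : ∀ k n, ‖b' k n‖ ≤ C)
    (haa' : Tendsto (fun k => ∑' n, ‖a' k n - a n‖) l (𝓝 0))
    (hbb' : ∀ n, Tendsto (fun k => b' k n) l (𝓝 (b n))) :
    Tendsto (fun k => ∑' n, a' k n • b' k n) l (𝓝 (∑' n, a n • b n)) := by
  have fixed_weights : Tendsto (fun k => ∑' n, a n • b' k n) l (𝓝 (∑' n, a n • b n)) :=
    tendsto_tsum_of_dominated_convergence (ha.mul_right C) (fun n => (hbb' n).const_smul (a n))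
      (.of_forall fun k n => norm_smul_le_norm_mul_of_norm_le (a n) (hb' k n))
  have weight_error : Tendsto (fun k => ∑' n, (a' k n - a n) • b' k n) l (𝓝 0) :=
    squeeze_zero_norm (fun k => norm_tsum_smul_le (ha' k) (hb' k))
      (by simpa only [zero_mul] using haa'.mul_const C)
  have split (k : κ) :
      ∑' n, a n • b' k n + ∑' n, (a' k n - a n) • b' k n = ∑' n, a' k n • b' k n := by
    rw [← (summable_smul_of_norm_le ha (hb' k)).tsum_add
      (summable_smul_of_norm_le (ha' k) (hb' k))]
    simp only [← add_smul, add_sub_cancel]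
  simpa only [split, add_zero] using fixed_weights.add weight_error

end WeightedSeries

section WeightedSumOfMeasures

variable {ι X E : Type*} [MeasurableSpace X] [NormedAddCommGroup E] {μ : ι → Measure X}
  {f : X → E}

theorem integral_norm_le_of_norm_le_const {C : ℝ} (ν : Measure X) [IsProbabilityMeasure ν]
    (hf : ∀ x, ‖f x‖ ≤ C) : ∫ x, ‖f x‖ ∂ν ≤ C :=
  calc
    ∫ x, ‖f x‖ ∂ν ≤ ∫ _, C ∂ν :=
      integral_mono_of_nonneg (.of_forall fun x => norm_nonneg (f x)) (integrable_const C)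
        (.of_forall hf)
    _ = C := by simp only [integral_const, probReal_univ, one_smul]

theorem integrable_sum_smul_measure [Countable ι] {w : ι → ℝ≥0∞} {C : ℝ} (hw : ∑' n, w n ≠ ∞)
    (hf : ∀ n, Integrable f (μ n)) (hC : ∀ n, ∫ x, ‖f x‖ ∂(μ n) ≤ C) :
    Integrable f (Measure.sum fun n => w n • μ n) := by
  refine integrable_sum_measure
    (fun n => (hf n).smul_measure (ENNReal.ne_top_of_tsum_ne_top hw n)) ?_
  simp only [integral_smul_measure]
  refine summable_smul_of_norm_le (C := C) (ENNReal.summable_toReal hw).norm fun n => ?_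
  rw [Real.norm_of_nonneg (integral_nonneg fun x => norm_nonneg (f x))]
  exact hC n

variable [NormedSpace ℝ E]

theorem integral_sum_smul_measure {w : ι → ℝ≥0∞}
    (hf : Integrable f (Measure.sum fun n => w n • μ n)) :
    ∫ x, f x ∂(Measure.sum fun n => w n • μ n) = ∑' n, (w n).toReal • ∫ x, f x ∂(μ n) := by
  simp only [integral_sum_measure hf, integral_smul_measure]

theorem integral_sum_ofReal_smul_measure [Countable ι] {a : ι → ℝ} {C : ℝ} (ha0 : ∀ n, 0 ≤ a n)
    (ha : Summable a) (hf : ∀ n, Integrable f (μ n)) (hC : ∀ n, ∫ x, ‖f x‖ ∂(μ n) ≤ C) :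
    ∫ x, f x ∂(Measure.sum fun n => ENNReal.ofReal (a n) • μ n) =
      ∑' n, a n • ∫ x, f x ∂(μ n) := by
  rw [integral_sum_smul_measure (integrable_sum_smul_measure ha.tsum_ofReal_ne_top hf hC)]
  simp only [ENNReal.toReal_ofReal (ha0 _)]

theorem convexCombo_tendsto_weakly_general {κ : Type*} {l : Filter κ} [Countable ι]
    [CompleteSpace E] {a : ι → ℝ} {a' : κ → ι → ℝ} {μ' : κ → ι → Measure X} {C : ℝ}
    (ha0 : ∀ n, 0 ≤ a n) (ha'0 : ∀ k n, 0 ≤ a' k n) (ha : Summable a) (ha' : ∀ k, Summable (a' k))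
    (hf : ∀ n, Integrable f (μ n)) (hf' : ∀ k n, Integrable f (μ' k n))
    (hC : ∀ n, ∫ x, ‖f x‖ ∂(μ n) ≤ C) (hC' : ∀ k n, ∫ x, ‖f x‖ ∂(μ' k n) ≤ C)
    (haconv : Tendsto (fun k => ∑' n, |a' k n - a n|) l (𝓝 0))
    (hμconv : ∀ n, Tendsto (fun k => ∫ x, f x ∂(μ' k n)) l (𝓝 (∫ x, f x ∂(μ n)))) :
    Tendsto (fun k => ∫ x, f x ∂(Measure.sum fun n => ENNReal.ofReal (a' k n) • μ' k n)) l
      (𝓝 (∫ x, f x ∂(Measure.sum fun n => ENNReal.ofReal (a n) • μ n))) := by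
  simp only [integral_sum_ofReal_smul_measure ha0 ha hf hC,
    fun k => integral_sum_ofReal_smul_measure (ha'0 k) (ha' k) (hf' k) (hC' k)]
  exact tendsto_tsum_smul_of_tendsto_tsum_norm_sub ha.norm (fun k => ((ha' k).sub ha).norm)
    (fun k n => (norm_integral_le_integral_norm f).trans (hC' k n)) haconv hμconv

end WeightedSumOfMeasures

/-- Continuity of countable convex combinations of probability measures: if the weight
sequences converge in `ℓ¹` and each `μₙₖ → μₙ` weakly (i.e. integrals of all bounded
continuous functions converge), then `∑ₙ aₙₖ μₙₖ → ∑ₙ aₙ μₙ` weakly as `k → ∞`. -/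
theorem convexCombo_tendsto_weakly {X : Type*} [MetricSpace X]
    [TopologicalSpace.SeparableSpace X] [MeasurableSpace X] [BorelSpace X]
    (a : ℕ → ℝ) (a' : ℕ → ℕ → ℝ)
    (ha0 : ∀ n, 0 ≤ a n) (ha'0 : ∀ k n, 0 ≤ a' k n)
    (hasum : ∑' n, a n = 1) (ha'sum : ∀ k, ∑' n, a' k n = 1)
    (μ : ℕ → Measure X) (μ' : ℕ → ℕ → Measure X)
    (hμ : ∀ n, IsProbabilityMeasure (μ n)) (hμ' : ∀ k n, IsProbabilityMeasure (μ' k n))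
    (haconv : Filter.Tendsto (fun k => ∑' n, |a' k n - a n|) Filter.atTop (nhds 0))
    (hμconv : ∀ n, ∀ f : BoundedContinuousFunction X ℝ,
      Filter.Tendsto (fun k => ∫ x, f x ∂(μ' k n)) Filter.atTop (nhds (∫ x, f x ∂(μ n)))) :
    ∀ f : BoundedContinuousFunction X ℝ,
      Filter.Tendsto
        (fun k => ∫ x, f x ∂(Measure.sum fun n => ENNReal.ofReal (a' k n) • μ' k n))
        Filter.atTop
        (nhds (∫ x, f x ∂(Measure.sum fun n => ENNReal.ofReal (a n) • μ n))) := by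
  exact fun f => convexCombo_tendsto_weakly_general ha0 ha'0
    (summable_of_tsum_ne_zero (hasum ▸ one_ne_zero))
    (fun k => summable_of_tsum_ne_zero (ha'sum k ▸ one_ne_zero))
    (fun n => f.integrable (μ n)) (fun k n => f.integrable (μ' k n))
    (fun n => integral_norm_le_of_norm_le_const (μ n) f.norm_coe_le_norm)
    (fun k n => integral_norm_le_of_norm_le_const (μ' k n) f.norm_coe_le_norm)
    haconv (hμconv · f)
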